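/- Let V₄ = {(e1,e2,e3,e4) ∈ E⁴ : e_i·e_j = 0 for all i ≠ j}. Then V₄ is the disjoint union of exactly two orbits under the action of the Weyl group W: the set O = {(e1,e2,e3,e4) ∈ V₄ : e1+e2+e3+e4 ∈ 2Λ}, which has exactly 3628800 elements, and its complement Y = V₄ \ O, which has exactly 43545600 elements. -/

import Mathlib

noncomputable section

/-- The standard dot product on ℝ^8. -/
def dot (a b : Fin 8 → ℝ) : ℝ := ∑ i, a i * b i

/-- Membership in the E8 lattice Λ: all coordinates are integers or all lie in ℤ + 1/2,
and the coordinates sum to an even integer. -/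
def inLambda (a : Fin 8 → ℝ) : Prop :=
  ((∀ i, ∃ n : ℤ, a i = n) ∨ (∀ i, ∃ n : ℤ, a i = n + 1 / 2)) ∧
    ∃ n : ℤ, (∑ i, a i) = 2 * n

/-- The E8 root system E: lattice vectors of squared norm 2. -/
def isRoot (a : Fin 8 → ℝ) : Prop := inLambda a ∧ dot a a = 2

/-- The Weyl group W: linear isometries of ℝ^8 mapping the root system E onto itself. -/
def IsWeyl (w : (Fin 8 → ℝ) ≃ₗ[ℝ] (Fin 8 → ℝ)) : Prop :=
  (∀ a b : Fin 8 → ℝ, dot (w a) (w b) = dot a b) ∧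
    (⇑w '' {a | isRoot a} = {a | isRoot a})


abbrev X8 := Fin 8 → ℝ

/-! ### Computable model -/

def ldot : List ℤ → List ℤ → ℤ
  | x :: xs, y :: ys => x * y + ldot xs ys
  | _, _ => 0

def genE : ℕ → ℕ → List (List ℤ)
  | 0, 0 => [[]]
  | 0, _ + 1 => []
  | k + 1, 0 => (genE k 0).map (fun l => 0 :: l)
  | k + 1, s + 1 => (genE k (s + 1)).map (fun l => 0 :: l) ++
      ((genE k s).map (fun l => 2 :: l) ++ (genE k s).map (fun l => (-2) :: l))

def genO : ℕ → List (List ℤ)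
  | 0 => [[]]
  | k + 1 => (genO k).map (fun l => 1 :: l) ++ (genO k).map (fun l => (-1) :: l)

def LR : List (List ℤ) :=
  genE 8 2 ++ (genO 8).filter (fun l => l.sum % 4 == 0)

def goodB (l : List ℤ) : Bool :=
  l.length == 8 && (l.all (fun x => x % 2 == 0) || l.all (fun x => x % 2 == 1)) &&
    l.sum % 4 == 0 && ldot l l == 8

lemma LR_good : LR.all goodB = true := by decide +kernel

def keyN (l : List ℤ) : ℕ := l.foldr (fun x k => (x + 2).toNat + 5 * k) 0

lemma LR_nodup : LR.Nodup := List.Nodup.of_map keyN (by decide +kernel)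

lemma LR_length : LR.length = 240 := by decide +kernel

def orthB (C : List (List ℤ)) (a : List ℤ) : Bool := C.all (fun c => ldot c a == 0)

def stepB (C : List (List ℤ)) (c : List ℤ) (p : List ℤ → Bool) : Bool :=
  LR.all fun a => !(orthB C a && p a) ||
    LR.any fun r => orthB C r &&
      (4 * ldot a c - ldot a r * ldot r c == 16 || 4 * ldot a c - ldot a r * ldot r c == 32)

def k1 : List ℤ := [2, 2, 0, 0, 0, 0, 0, 0]
def k2 : List ℤ := [2, -2, 0, 0, 0, 0, 0, 0]
def k3 : List ℤ := [0, 0, 2, 2, 0, 0, 0, 0]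
def k4 : List ℤ := [0, 0, 2, -2, 0, 0, 0, 0]
def k4' : List ℤ := [0, 0, 0, 0, 2, 2, 0, 0]

def evB (a : List ℤ) : Bool :=
  LR.all fun r => (ldot k1 r + ldot k2 r + ldot k3 r + ldot a r) % 8 == 0

lemma step0 : stepB [] k1 (fun _ => true) = true := by decide +kernel
lemma step1 : stepB [k1] k2 (fun _ => true) = true := by decide +kernel
lemma step2 : stepB [k1, k2] k3 (fun _ => true) = true := by decide +kernel
lemma step3 : stepB [k1, k2, k3] k4 evB = true := by decide +kernel
lemma step3' : stepB [k1, k2, k3] k4' (fun a => !(evB a)) = true := by decide +kernel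
lemma cnt0 : (LR.filter (fun a => orthB [] a)).length = 240 := by decide +kernel
lemma cnt1 : (LR.filter (fun a => orthB [k1] a)).length = 126 := by decide +kernel
lemma cnt2 : (LR.filter (fun a => orthB [k1, k2] a)).length = 60 := by decide +kernel
lemma cnt3 : (LR.filter (fun a => orthB [k1, k2, k3] a && evB a)).length = 2 := by
  decide +kernel
lemma cnt3' : (LR.filter (fun a => orthB [k1, k2, k3] a && !(evB a))).length = 24 := by
  decide +kernel
lemma kmem : k1 ∈ LR ∧ k2 ∈ LR ∧ k3 ∈ LR ∧ k4 ∈ LR ∧ k4' ∈ LR := by decide +kernel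

/-! ### The dot product -/

lemma dot_comm' (a b : X8) : dot a b = dot b a := by
  unfold dot; exact Finset.sum_congr rfl fun i _ => mul_comm _ _

lemma dot_add_left (a b c : X8) : dot (a + b) c = dot a c + dot b c := by
  simp [dot, add_mul, Finset.sum_add_distrib]

lemma dot_sub_left (a b c : X8) : dot (a - b) c = dot a c - dot b c := by
  simp [dot, sub_mul, Finset.sum_sub_distrib]

lemma dot_smul_left (t : ℝ) (b c : X8) : dot (t • b) c = t * dot b c := by
  simp [dot, Finset.mul_sum, mul_assoc]

lemma dot_add_right (a b c : X8) : dot c (a + b) = dot c a + dot c b := by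
  rw [dot_comm', dot_add_left, dot_comm' a, dot_comm' b]

lemma dot_sub_right (a b c : X8) : dot c (a - b) = dot c a - dot c b := by
  rw [dot_comm', dot_sub_left, dot_comm' a, dot_comm' b]

lemma dot_smul_right (t : ℝ) (b c : X8) : dot c (t • b) = t * dot c b := by
  rw [dot_comm', dot_smul_left, dot_comm' b]

lemma dot_self_zero (a : X8) (h : dot a a = 0) : a = 0 := by
  unfold dot at h
  rw [Finset.sum_eq_zero_iff_of_nonneg (fun i _ => mul_self_nonneg _)] at h
  funext i
  simpa using h i (Finset.mem_univ _)

lemma lam_cast (a : X8) (h : inLambda a) :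
    (∃ n : Fin 8 → ℤ, a = fun i => (n i : ℝ)) ∨
      (∃ n : Fin 8 → ℤ, a = fun i => (n i : ℝ) + 1 / 2) := by
  rcases h.1 with h | h
  · choose n hn using h
    exact Or.inl ⟨n, funext hn⟩
  · choose n hn using h
    exact Or.inr ⟨n, funext hn⟩

lemma sum8_half (n : Fin 8 → ℤ) : (∑ i, ((n i : ℝ) + 1 / 2)) = ((∑ i, n i : ℤ) : ℝ) + 4 := by
  rw [Finset.sum_add_distrib]; push_cast; norm_num

lemma dot_int (a b : X8) (ha : inLambda a) (hb : inLambda b) : ∃ n : ℤ, dot a b = n := by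
  obtain ⟨p, hp⟩ := ha.2
  obtain ⟨q, hq⟩ := hb.2
  rcases lam_cast a ha with ⟨m, rfl⟩ | ⟨m, rfl⟩ <;> rcases lam_cast b hb with ⟨n, rfl⟩ | ⟨n, rfl⟩
  · exact ⟨∑ i, m i * n i, by simp [dot]⟩
  · refine ⟨∑ i, m i * n i + p, ?_⟩
    simp only [dot, mul_add, Finset.sum_add_distrib, ← Finset.sum_mul, hp]
    push_cast; ring
  · refine ⟨∑ i, m i * n i + q, ?_⟩
    simp only [dot, add_mul, Finset.sum_add_distrib, ← Finset.mul_sum, hq]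
    push_cast; ring
  · refine ⟨∑ i, m i * n i + p + q - 2, ?_⟩
    rw [sum8_half] at hp hq
    have : dot (fun i => (m i : ℝ) + 1 / 2) (fun i => (n i : ℝ) + 1 / 2) =
        ∑ i, ((m i : ℝ) * n i) + (∑ i, (m i : ℝ)) / 2 + (∑ i, (n i : ℝ)) / 2 + 2 := by
      simp only [dot, Fin.sum_univ_eight]; ring
    rw [this]
    push_cast at hp hq ⊢
    linarith

lemma root_pm (i j : Fin 8) (h : i ≠ j) (e : ℤ) (he : e = 1 ∨ e = -1) :
    isRoot (Pi.single i 1 + (e : ℝ) • Pi.single j 1) := by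
  refine ⟨⟨Or.inl fun k => ⟨(if k = i then 1 else 0) + e * (if k = j then 1 else 0), ?_⟩, ?_⟩, ?_⟩
  · simp [Pi.single_apply]
  · rcases he with rfl | rfl
    · exact ⟨1, by simp [Finset.sum_add_distrib, Pi.single_apply]; norm_num⟩
    · exact ⟨0, by simp [Finset.sum_add_distrib, Pi.single_apply]⟩
  · have : (e : ℝ) * e = 1 := by rcases he with rfl | rfl <;> norm_num
    simp [dot, Pi.single_apply, add_mul, mul_add, Finset.sum_add_distrib, h, h.symm, this]
    norm_num

lemma dot_pm (x : X8) (i j : Fin 8) (e : ℝ) :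
    dot x (Pi.single i 1 + e • Pi.single j 1) = x i + e * x j := by
  simp [dot, Pi.single_apply, mul_add, Finset.sum_add_distrib, mul_comm]

lemma root_half : isRoot (fun _ => 1 / 2) := by
  refine ⟨⟨Or.inr fun k => ⟨0, by simp⟩, ⟨2, by norm_num⟩⟩, by simp [dot]; norm_num⟩

lemma lam_iff (x : X8) : inLambda x ↔ ∀ r, isRoot r → ∃ n : ℤ, dot x r = n := by
  refine ⟨fun h r hr => dot_int x r h hr.1, fun h => ⟨?_, ?_⟩⟩
  · have hs : ∀ i : Fin 8, i ≠ 0 → ∃ n : ℤ, x 0 + x i = n := fun i hi => by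
      obtain ⟨n, hn⟩ := h _ (root_pm 0 i hi.symm 1 (Or.inl rfl))
      rw [dot_pm] at hn
      exact ⟨n, by rw [← hn]; simp⟩
    have hd : ∀ i : Fin 8, i ≠ 0 → ∃ n : ℤ, x 0 - x i = n := fun i hi => by
      obtain ⟨n, hn⟩ := h _ (root_pm 0 i hi.symm (-1) (Or.inr rfl))
      rw [dot_pm] at hn
      exact ⟨n, by rw [← hn]; push_cast; ring⟩
    obtain ⟨p, hp⟩ := hs 1 (by decide)
    obtain ⟨q, hq⟩ := hd 1 (by decide)
    rcases Int.even_or_odd' (p + q) with ⟨c, hc | hc⟩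
    · left
      have hx : x 0 = c := by
        have : ((p + q : ℤ) : ℝ) = ((2 * c : ℤ) : ℝ) := by rw [hc]
        push_cast at this; linarith
      intro i
      by_cases hi : i = 0
      · exact ⟨c, by rw [hi, hx]⟩
      · obtain ⟨n, hn⟩ := hd i hi
        exact ⟨c - n, by push_cast; linarith⟩
    · right
      have hx : x 0 = c + 1 / 2 := by
        have : ((p + q : ℤ) : ℝ) = ((2 * c + 1 : ℤ) : ℝ) := by rw [hc]
        push_cast at this; linarith
      intro i
      by_cases hi : i = 0
      · exact ⟨c, by rw [hi, hx]⟩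
      · obtain ⟨n, hn⟩ := hd i hi
        exact ⟨c - n, by push_cast; linarith⟩
  · obtain ⟨n, hn⟩ := h _ root_half
    refine ⟨n, ?_⟩
    rw [← hn]; simp only [dot, ← Finset.sum_mul]; ring

def twoL (s : X8) : Prop := ∃ x, inLambda x ∧ s = (2 : ℝ) • x

lemma twoL_iff (s : X8) : twoL s ↔ ∀ r, isRoot r → ∃ n : ℤ, dot s r = 2 * n := by
  constructor
  · rintro ⟨x, hx, rfl⟩ r hr
    obtain ⟨n, hn⟩ := (lam_iff x).1 hx r hr
    exact ⟨n, by rw [dot_smul_left, hn]⟩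
  · intro h
    refine ⟨(1 / 2 : ℝ) • s, (lam_iff _).2 fun r hr => ?_, by simp [smul_smul]⟩
    obtain ⟨n, hn⟩ := h r hr
    exact ⟨n, by rw [dot_smul_left, hn]; ring⟩

/-! ### Weyl group -/

lemma weyl_root {w : X8 ≃ₗ[ℝ] X8} (hw : IsWeyl w) (a : X8) : isRoot (w a) ↔ isRoot a := by
  constructor
  · intro h
    have : w a ∈ ⇑w '' {a | isRoot a} := by rw [hw.2]; exact h
    obtain ⟨b, hb, hab⟩ := this
    rwa [← w.injective hab]
  · intro h
    have : w a ∈ ⇑w '' {a | isRoot a} := ⟨a, h, rfl⟩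
    rw [hw.2] at this; exact this

lemma weyl_mk (w : X8 ≃ₗ[ℝ] X8) (h1 : ∀ a b, dot (w a) (w b) = dot a b)
    (h2 : ∀ a, isRoot (w a) ↔ isRoot a) : IsWeyl w := by
  refine ⟨h1, ?_⟩
  ext b
  constructor
  · rintro ⟨a, ha, rfl⟩; exact (h2 a).2 ha
  · intro hb
    refine ⟨w.symm b, ?_, by simp⟩
    have := (h2 (w.symm b)).1
    simp only [LinearEquiv.apply_symm_apply] at this
    exact this hb

lemma weyl_refl : IsWeyl (LinearEquiv.refl ℝ X8) := weyl_mk _ (by simp) (by simp)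

lemma weyl_trans {w v : X8 ≃ₗ[ℝ] X8} (hw : IsWeyl w) (hv : IsWeyl v) : IsWeyl (w.trans v) :=
  weyl_mk _ (fun a b => by simp [hw.1, hv.1]) (fun a => by simp [weyl_root hw, weyl_root hv])

lemma weyl_symm {w : X8 ≃ₗ[ℝ] X8} (hw : IsWeyl w) : IsWeyl w.symm :=
  weyl_mk _ (fun a b => by rw [← hw.1]; simp) (fun a => by rw [← weyl_root hw]; simp)

lemma weyl_twoL {w : X8 ≃ₗ[ℝ] X8} (hw : IsWeyl w) (s : X8) : twoL (w s) ↔ twoL s := by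
  rw [twoL_iff, twoL_iff]
  constructor
  · intro h r hr
    rw [← hw.1]; exact h _ ((weyl_root hw r).2 hr)
  · intro h r hr
    have := h (w.symm r) ((weyl_root (weyl_symm hw) r).2 hr)
    rw [← hw.1] at this
    simpa using this

lemma refl_invol (r : X8) (hr : dot r r = 2) (a : X8) :
    (a - dot a r • r) - dot (a - dot a r • r) r • r = a := by
  rw [dot_sub_left, dot_smul_left, hr]
  module

def reflE (r : X8) (hr : dot r r = 2) : X8 ≃ₗ[ℝ] X8 where
  toFun a := a - dot a r • r
  invFun a := a - dot a r • r
  map_add' a b := by rw [dot_add_left]; module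
  map_smul' t a := by rw [dot_smul_left]; simp only [RingHom.id_apply]; module
  left_inv a := refl_invol r hr a
  right_inv a := refl_invol r hr a

lemma reflE_apply (r : X8) (hr : dot r r = 2) (a : X8) : reflE r hr a = a - dot a r • r := rfl

lemma reflE_dot (r : X8) (hr : dot r r = 2) (a b : X8) :
    dot (reflE r hr a) (reflE r hr b) = dot a b := by
  simp only [reflE_apply, dot_sub_left, dot_sub_right, dot_smul_left, dot_smul_right, hr,
    dot_comm' r]
  ring

lemma lam_comb (a b : X8) (n : ℤ) (ha : inLambda a) (hb : inLambda b) :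
    inLambda (a - (n : ℝ) • b) := by
  rw [lam_iff]
  intro r hr
  obtain ⟨p, hp⟩ := dot_int a r ha hr.1
  obtain ⟨q, hq⟩ := dot_int b r hb hr.1
  exact ⟨p - n * q, by rw [dot_sub_left, dot_smul_left, hp, hq]; push_cast; ring⟩

lemma reflE_root (r : X8) (hr : isRoot r) (a : X8) (ha : isRoot a) :
    isRoot (reflE r hr.2 a) := by
  refine ⟨?_, by rw [reflE_dot]; exact ha.2⟩
  obtain ⟨n, hn⟩ := dot_int a r ha.1 hr.1
  rw [reflE_apply, hn]
  exact lam_comb _ _ _ ha.1 hr.1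

lemma reflE_weyl (r : X8) (hr : isRoot r) : IsWeyl (reflE r hr.2) := by
  refine weyl_mk _ (reflE_dot r hr.2) fun a => ⟨fun h => ?_, reflE_root r hr a⟩
  have := reflE_root r hr _ h
  rwa [reflE_apply, reflE_apply, refl_invol r hr.2] at this

lemma move1 (S : Set X8) (a c : X8) (ha : isRoot a) (hc : isRoot c)
    (hSa : ∀ s ∈ S, dot s a = 0) (hSc : ∀ s ∈ S, dot s c = 0) (h : dot a c = 1 ∨ dot a c = 2) :
    ∃ w, IsWeyl w ∧ (∀ s ∈ S, w s = s) ∧ w a = c := by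
  rcases h with h | h
  · have hr : isRoot (a - c) := by
      refine ⟨by simpa using lam_comb a c 1 ha.1 hc.1, ?_⟩
      rw [dot_sub_left, dot_sub_right, dot_sub_right, ha.2, hc.2, dot_comm' c a, h]; norm_num
    refine ⟨_, reflE_weyl _ hr, fun s hs => ?_, ?_⟩
    · rw [reflE_apply, dot_sub_right, hSa s hs, hSc s hs]; simp
    · rw [reflE_apply, dot_sub_right, ha.2, h]; norm_num
  · refine ⟨_, weyl_refl, fun s _ => rfl, ?_⟩
    have : a - c = 0 := by
      apply dot_self_zero
      rw [dot_sub_left, dot_sub_right, dot_sub_right, ha.2, hc.2, dot_comm' c a, h]; norm_num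
    simpa [sub_eq_zero] using this

lemma move2 (S : Set X8) (a c r : X8) (ha : isRoot a) (hc : isRoot c) (hr : isRoot r)
    (hSa : ∀ s ∈ S, dot s a = 0) (hSc : ∀ s ∈ S, dot s c = 0) (hSr : ∀ s ∈ S, dot s r = 0)
    (h : dot a c - dot a r * dot r c = 1 ∨ dot a c - dot a r * dot r c = 2) :
    ∃ w, IsWeyl w ∧ (∀ s ∈ S, w s = s) ∧ w a = c := by
  have hfix : ∀ s ∈ S, reflE r hr.2 s = s := fun s hs => by rw [reflE_apply, hSr s hs]; simp
  obtain ⟨w, hw, hwS, hwa⟩ := move1 S (reflE r hr.2 a) c (reflE_root r hr a ha) hc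
    (fun s hs => by rw [← hfix s hs, reflE_dot]; exact hSa s hs) hSc
    (by rw [reflE_apply, dot_sub_left, dot_smul_left]; exact h)
  exact ⟨_, weyl_trans (reflE_weyl r hr) hw, fun s hs => by simp [hfix s hs, hwS s hs],
    by simpa using hwa⟩

/-! ### Lists versus vectors -/

def toV (l : List ℤ) : X8 := fun i => ((l.getD i 0 : ℤ) : ℝ) / 2

lemma len8 (l : List ℤ) (h : l.length = 8) :
    ∃ a b c d e f g k : ℤ, l = [a, b, c, d, e, f, g, k] := by
  match l, h with
  | [a, b, c, d, e, f, g, k], _ => exact ⟨a, b, c, d, e, f, g, k, rfl⟩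

lemma good_of_mem {l : List ℤ} (h : l ∈ LR) : l.length = 8 ∧
    ((∀ x ∈ l, x % 2 = 0) ∨ (∀ x ∈ l, x % 2 = 1)) ∧ l.sum % 4 = 0 ∧ ldot l l = 8 := by
  have := List.all_eq_true.1 LR_good l h
  simpa [goodB, and_assoc] using this

lemma dot_toV {l m : List ℤ} (hl : l ∈ LR) (hm : m ∈ LR) :
    dot (toV l) (toV m) = (ldot l m : ℝ) / 4 := by
  obtain ⟨a, b, c, d, e, f, g, k, rfl⟩ := len8 l (good_of_mem hl).1
  obtain ⟨a', b', c', d', e', f', g', k', rfl⟩ := len8 m (good_of_mem hm).1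
  simp [dot, toV, ldot, Fin.sum_univ_eight]
  ring

lemma toV_inj {l m : List ℤ} (hl : l ∈ LR) (hm : m ∈ LR) (h : toV l = toV m) : l = m := by
  apply List.ext_getElem (by rw [(good_of_mem hl).1, (good_of_mem hm).1])
  intro i h1 h2
  have h8 : i < 8 := by rw [(good_of_mem hl).1] at h1; exact h1
  have := congrFun h ⟨i, h8⟩
  simp only [toV] at this
  have h3 : ((l.getD i 0 : ℤ) : ℝ) = ((m.getD i 0 : ℤ) : ℝ) := by linarith
  have h4 := Int.cast_injective h3
  rw [List.getD_eq_getElem _ _ h1, List.getD_eq_getElem _ _ h2] at h4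
  exact h4

lemma toV_root {l : List ℤ} (hl : l ∈ LR) : isRoot (toV l) := by
  obtain ⟨h8, hp, hs, hn⟩ := good_of_mem hl
  refine ⟨⟨?_, ?_⟩, by rw [dot_toV hl hl, hn]; norm_num⟩
  · have hmem : ∀ i : Fin 8, l.getD i 0 ∈ l := fun i => by
      rw [List.getD_eq_getElem _ _ (by rw [h8]; exact i.2)]; exact List.getElem_mem _
    rcases hp with hp | hp
    · refine Or.inl fun i => ⟨l.getD i 0 / 2, ?_⟩
      have h1 := hp _ (hmem i)
      have h2 : l.getD i 0 = 2 * (l.getD i 0 / 2) := by omega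
      have h3 : ((l.getD i 0 : ℤ) : ℝ) = 2 * ((l.getD i 0 / 2 : ℤ) : ℝ) := by exact_mod_cast h2
      simp only [toV]; rw [h3]; ring
    · refine Or.inr fun i => ⟨l.getD i 0 / 2, ?_⟩
      have h1 := hp _ (hmem i)
      have h2 : l.getD i 0 = 2 * (l.getD i 0 / 2) + 1 := by omega
      have h3 : ((l.getD i 0 : ℤ) : ℝ) = 2 * ((l.getD i 0 / 2 : ℤ) : ℝ) + 1 := by
        exact_mod_cast h2
      simp only [toV]; rw [h3]; ring
  · refine ⟨l.sum / 4, ?_⟩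
    have h2 : l.sum = 4 * (l.sum / 4) := by omega
    have h3 : (l.sum : ℝ) = 4 * ((l.sum / 4 : ℤ) : ℝ) := by exact_mod_cast h2
    have h4 : (∑ i, toV l i) = (l.sum : ℝ) / 2 := by
      obtain ⟨a, b, c, d, e, f, g, k, rfl⟩ := len8 l h8
      simp [toV, Fin.sum_univ_eight]
      ring
    rw [h4, h3]; ring

lemma genE_mem : ∀ (l : List ℤ) (s : ℕ), s ≤ 2 → (l.map (fun x => x * x)).sum = (s : ℤ) →
    l.map (fun x => 2 * x) ∈ genE l.length s
  | [], s, _, h => by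
    have : s = 0 := by simpa using h.symm
    subst this; simp [genE]
  | x :: xs, s, hs, h => by
    simp only [List.map_cons, List.sum_cons] at h
    have hnn : 0 ≤ (xs.map (fun x => x * x)).sum :=
      List.sum_nonneg (by intro y hy; obtain ⟨z, _, rfl⟩ := List.mem_map.1 hy; exact mul_self_nonneg z)
    have hs' : (s : ℤ) ≤ 2 := by exact_mod_cast hs
    have hx1 : x ≤ 1 := by nlinarith
    have hx2 : -1 ≤ x := by nlinarith
    have hx : x = 0 ∨ x = 1 ∨ x = -1 := by omega
    rcases hx with rfl | rfl | rfl
    · have := genE_mem xs s hs (by simpa using h)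
      cases s <;> simp [genE, this]
    · obtain ⟨t, rfl⟩ : ∃ t, s = t + 1 := ⟨s - 1, by omega⟩
      have := genE_mem xs t (by omega) (by push_cast at h; linarith)
      simp [genE, this]
    · obtain ⟨t, rfl⟩ : ∃ t, s = t + 1 := ⟨s - 1, by omega⟩
      have := genE_mem xs t (by omega) (by push_cast at h; linarith)
      simp [genE, this]

lemma genO_mem : ∀ (l : List ℤ), (∀ x ∈ l, x = 1 ∨ x = -1) → l ∈ genO l.length
  | [], _ => by simp [genO]
  | x :: xs, h => by
    have := genO_mem xs fun y hy => h y (by simp [hy])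
    rcases h x (by simp) with rfl | rfl <;> simp [genO, this]

lemma root_toV (a : X8) (ha : isRoot a) : ∃ l ∈ LR, a = toV l := by
  obtain ⟨hl, hn⟩ := ha
  obtain ⟨p, hp⟩ := hl.2
  rcases lam_cast a hl with ⟨n, rfl⟩ | ⟨n, rfl⟩
  · refine ⟨[n 0, n 1, n 2, n 3, n 4, n 5, n 6, n 7].map (fun x => 2 * x), ?_, ?_⟩
    · refine List.mem_append_left _ (genE_mem _ 2 le_rfl ?_)
      simp only [dot, Fin.sum_univ_eight] at hn
      have hn' : n 0 * n 0 + n 1 * n 1 + n 2 * n 2 + n 3 * n 3 + n 4 * n 4 + n 5 * n 5 +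
        n 6 * n 6 + n 7 * n 7 = 2 := by exact_mod_cast hn
      simp only [List.map_cons, List.map_nil, List.sum_cons, List.sum_nil]
      push_cast
      linarith
    · funext i
      fin_cases i <;> simp [toV]
  · rw [sum8_half] at hp
    refine ⟨[n 0, n 1, n 2, n 3, n 4, n 5, n 6, n 7].map (fun x => 2 * x + 1), ?_, ?_⟩
    · refine List.mem_append_right _ (List.mem_filter.2 ⟨genO_mem _ ?_, ?_⟩)
      · have hsum : ∑ i, (n i * n i + n i) = 0 := by
          have h0 : dot (fun i => (n i : ℝ) + 1 / 2) (fun i => (n i : ℝ) + 1 / 2) =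
              ((∑ i, (n i * n i + n i) : ℤ) : ℝ) + 2 := by
            push_cast
            simp only [dot, Fin.sum_univ_eight]; ring
          have h1 : ((∑ i, (n i * n i + n i) : ℤ) : ℝ) = 0 := by linarith
          exact_mod_cast h1
        have hnn : ∀ i ∈ Finset.univ, 0 ≤ n i * n i + n i := fun i _ => by
          rcases le_or_gt 0 (n i) with h | h <;> nlinarith
        rw [Finset.sum_eq_zero_iff_of_nonneg hnn] at hsum
        have hz : ∀ i, 2 * n i + 1 = 1 ∨ 2 * n i + 1 = -1 := fun i => by
          have h1 := hsum i (Finset.mem_univ _)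
          have h2 : n i * (n i + 1) = 0 := by linarith
          rcases mul_eq_zero.1 h2 with h | h <;> omega
        intro x hx
        obtain ⟨y, hy, rfl⟩ := List.mem_map.1 hx
        simp only [List.mem_cons, List.not_mem_nil, or_false] at hy
        rcases hy with rfl | rfl | rfl | rfl | rfl | rfl | rfl | rfl <;> exact hz _
      · have hp' : ∑ i, n i + 4 = 2 * p := by exact_mod_cast hp
        rw [Fin.sum_univ_eight] at hp'
        simp only [List.map_cons, List.map_nil, List.sum_cons, List.sum_nil, beq_iff_eq]
        omega
    · funext i
      fin_cases i <;> simp [toV] <;> ring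

lemma forall_root (P : X8 → Prop) : (∀ r, isRoot r → P r) ↔ ∀ l ∈ LR, P (toV l) := by
  constructor
  · exact fun h l hl => h _ (toV_root hl)
  · intro h r hr
    obtain ⟨l, hl, rfl⟩ := root_toV r hr
    exact h l hl

lemma count_root (Q : X8 → Prop) (p : List ℤ → Bool)
    (h : ∀ l ∈ LR, Q (toV l) ↔ p l = true) :
    {x | isRoot x ∧ Q x}.ncard = (LR.filter p).length := by
  have h1 : {x | isRoot x ∧ Q x} = toV '' {l | l ∈ LR.filter p} := by
    ext x
    constructor
    · rintro ⟨hx, hq⟩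
      obtain ⟨l, hl, rfl⟩ := root_toV x hx
      exact ⟨l, List.mem_filter.2 ⟨hl, (h l hl).1 hq⟩, rfl⟩
    · rintro ⟨l, hl, rfl⟩
      obtain ⟨h1, h2⟩ := List.mem_filter.1 hl
      exact ⟨toV_root h1, (h l h1).2 h2⟩
  rw [h1, Set.InjOn.ncard_image]
  · rw [← List.toFinset_card_of_nodup (LR_nodup.filter p), ← Set.ncard_coe_finset]
    congr 1
    ext; simp
  · intro l hl m hm
    exact toV_inj (List.mem_filter.1 hl).1 (List.mem_filter.1 hm).1

lemma orth_toV (C : List (List ℤ)) (hC : ∀ c ∈ C, c ∈ LR) (l : List ℤ) (hl : l ∈ LR) :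
    (∀ s ∈ {x | ∃ c ∈ C, x = toV c}, dot s (toV l) = 0) ↔ orthB C l = true := by
  simp only [orthB, List.all_eq_true, beq_iff_eq, Set.mem_ofPred_eq]
  constructor
  · intro h c hc
    have := h _ ⟨c, hc, rfl⟩
    rw [dot_toV (hC c hc) hl] at this
    have h2 : (ldot c l : ℝ) = 0 := by linarith
    exact_mod_cast h2
  · rintro h _ ⟨c, hc, rfl⟩
    rw [dot_toV (hC c hc) hl, h c hc]; simp

lemma step_move (C : List (List ℤ)) (hC : ∀ c ∈ C, c ∈ LR) (c : List ℤ) (hc : c ∈ LR)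
    (hCc : orthB C c = true) (P : X8 → Prop) (p : List ℤ → Bool)
    (hp : ∀ l ∈ LR, P (toV l) ↔ p l = true) (hstep : stepB C c p = true)
    (a : X8) (ha : isRoot a) (hPa : P a) (hCa : ∀ s ∈ {x | ∃ c ∈ C, x = toV c}, dot s a = 0) :
    ∃ w, IsWeyl w ∧ (∀ s ∈ {x | ∃ c ∈ C, x = toV c}, w s = s) ∧ w a = toV c := by
  obtain ⟨l, hl, rfl⟩ := root_toV a ha
  have h1 := List.all_eq_true.1 hstep l hl
  rw [(orth_toV C hC l hl).1 hCa, (hp l hl).1 hPa] at h1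
  simp only [Bool.and_self, Bool.not_true, Bool.false_or, List.any_eq_true, Bool.and_eq_true,
    Bool.or_eq_true, beq_iff_eq] at h1
  obtain ⟨r, hr, hCr, h⟩ := h1
  refine move2 _ _ _ (toV r) ha (toV_root hc) (toV_root hr) hCa ((orth_toV C hC c hc).2 hCc)
    ((orth_toV C hC r hr).2 hCr) ?_
  rw [dot_toV hl hc, dot_toV hl hr, dot_toV hr hc]
  rcases h with h | h
  · left
    have : (4 * (ldot l c : ℝ) - ldot l r * ldot r c) = 16 := by exact_mod_cast h
    linarith
  · right
    have : (4 * (ldot l c : ℝ) - ldot l r * ldot r c) = 32 := by exact_mod_cast h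
    linarith

/-! ### Tuples -/

def Orth (n : ℕ) : Set (Fin n → X8) :=
  {v | (∀ i, isRoot (v i)) ∧ ∀ i j, i ≠ j → dot (v i) (v j) = 0}

lemma orth_snoc {n : ℕ} (u : Fin n → X8) (x : X8) :
    (Fin.snoc u x : Fin (n + 1) → X8) ∈ Orth (n + 1) ↔
      u ∈ Orth n ∧ isRoot x ∧ ∀ i, dot (u i) x = 0 := by
  constructor
  · rintro ⟨h1, h2⟩
    refine ⟨⟨fun i => by simpa using h1 i.castSucc, fun i j hij => ?_⟩,
      by simpa using h1 (Fin.last n), fun i => ?_⟩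
    · simpa using h2 i.castSucc j.castSucc (by simpa using hij)
    · simpa using h2 i.castSucc (Fin.last n) (Fin.castSucc_lt_last i).ne
  · rintro ⟨⟨h1, h2⟩, hx, h3⟩
    refine ⟨fun i => ?_, fun i j => ?_⟩
    · induction i using Fin.lastCases with
      | last => simpa using hx
      | cast i => simpa using h1 i
    · induction i using Fin.lastCases with
      | last =>
        induction j using Fin.lastCases with
        | last => simp
        | cast j => intro _; simpa [dot_comm' x] using h3 j
      | cast i =>
        induction j using Fin.lastCases with
        | last => intro _; simpa using h3 i
        | cast j => intro hij; simpa using h2 i j (by simpa using hij)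

lemma fib_count {n m : ℕ} (hm : m ≠ 0) (A : Set (Fin n → X8)) (hAf : A.Finite)
    (B : Set (Fin (n + 1) → X8))
    (hB : ∀ u x, (Fin.snoc u x : Fin (n + 1) → X8) ∈ B → u ∈ A)
    (hA : ∀ u ∈ A, {x : X8 | (Fin.snoc u x : Fin (n + 1) → X8) ∈ B}.ncard = m) :
    B.Finite ∧ B.ncard = A.ncard * m := by
  have e : B ≃ Σ u : A, {x : X8 | (Fin.snoc u.1 x : Fin (n + 1) → X8) ∈ B} :=
    { toFun := fun v => ⟨⟨Fin.init v.1, hB _ (v.1 (Fin.last n)) (by simp)⟩,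
        ⟨v.1 (Fin.last n), by simp⟩⟩
      invFun := fun p => ⟨Fin.snoc p.1.1 p.2.1, p.2.2⟩
      left_inv := fun v => by simp
      right_inv := fun ⟨⟨u, hu⟩, ⟨x, hx⟩⟩ =>
        Sigma.subtype_ext (p := fun (u : A) x => (Fin.snoc u.1 x : Fin (n + 1) → X8) ∈ B)
          (by simp) (by simp) }
  have : Fintype A := hAf.fintype
  have hf : ∀ u : A, Finite {x : X8 | (Fin.snoc u.1 x : Fin (n + 1) → X8) ∈ B} := fun u =>
    Set.finite_of_ncard_ne_zero (by rw [hA u.1 u.2]; exact hm)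
  constructor
  · exact Set.finite_coe_iff.1 (Finite.of_equiv _ e.symm)
  · rw [← Nat.card_coe_set_eq B, Nat.card_congr e, Nat.card_sigma]
    have : ∀ u : A, Nat.card {x : X8 | (Fin.snoc u.1 x : Fin (n + 1) → X8) ∈ B} = m := fun u => by
      rw [Nat.card_coe_set_eq]; exact hA u.1 u.2
    simp only [this, Finset.sum_const, smul_eq_mul, Finset.card_univ, ← Nat.card_eq_fintype_card]
    rw [Nat.card_coe_set_eq]

def TT (n : ℕ) (K : Fin n → List ℤ) : Prop :=
  ∀ u ∈ Orth n, ∃ w, IsWeyl w ∧ ∀ i, w (u i) = toV (K i)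

lemma T_step {n : ℕ} (K : Fin n → List ℤ) (hT : TT n K) (C : List (List ℤ))
    (hCK : ∀ c, c ∈ C ↔ ∃ i, c = K i) (hC : ∀ c ∈ C, c ∈ LR) (c : List ℤ) (hc : c ∈ LR)
    (hCc : orthB C c = true) (P : X8 → Prop) (p : List ℤ → Bool)
    (hp : ∀ l ∈ LR, P (toV l) ↔ p l = true) (hstep : stepB C c p = true)
    (u : Fin n → X8) (hu : u ∈ Orth n) (x : X8) (hx : isRoot x) (hux : ∀ i, dot (u i) x = 0)
    (hP : ∀ w, IsWeyl w → (∀ i, w (u i) = toV (K i)) → P (w x)) :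
    ∃ w, IsWeyl w ∧ (∀ i, w (u i) = toV (K i)) ∧ w x = toV c := by
  obtain ⟨w, hw, hwu⟩ := hT u hu
  obtain ⟨w', hw', hS, hx'⟩ := step_move C hC c hc hCc P p hp hstep (w x)
    ((weyl_root hw x).2 hx) (hP w hw hwu) (by
      rintro _ ⟨c, hc, rfl⟩
      obtain ⟨i, rfl⟩ := (hCK c).1 hc
      rw [← hwu, hw.1]; exact hux i)
  refine ⟨_, weyl_trans hw hw', fun i => ?_, by simpa using hx'⟩
  simp only [LinearEquiv.trans_apply, hwu]
  exact hS _ ⟨_, (hCK _).2 ⟨i, rfl⟩, rfl⟩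

lemma T_succ {n : ℕ} (K : Fin n → List ℤ) (hT : TT n K) (C : List (List ℤ))
    (hCK : ∀ c, c ∈ C ↔ ∃ i, c = K i) (hC : ∀ c ∈ C, c ∈ LR) (c : List ℤ) (hc : c ∈ LR)
    (hCc : orthB C c = true) (hstep : stepB C c (fun _ => true) = true) :
    TT (n + 1) (Fin.snoc K c : Fin (n + 1) → List ℤ) := by
  intro v hv
  rw [← Fin.snoc_init_self v, orth_snoc] at hv
  obtain ⟨hu, hx, hux⟩ := hv
  obtain ⟨w, hw, h1, h2⟩ := T_step K hT C hCK hC c hc hCc (fun _ => True) _ (by simp) hstep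
    _ hu _ hx hux (fun _ _ _ => trivial)
  refine ⟨w, hw, fun i => ?_⟩
  induction i using Fin.lastCases with
  | last => rw [Fin.snoc_last]; exact h2
  | cast i => rw [Fin.snoc_castSucc]; exact h1 i

lemma count_weyl {w : X8 ≃ₗ[ℝ] X8} (hw : IsWeyl w) (Q Q' : X8 → Prop)
    (h : ∀ x, Q x ↔ Q' (w x)) :
    {x | isRoot x ∧ Q x}.ncard = {x | isRoot x ∧ Q' x}.ncard := by
  rw [← Set.ncard_image_of_injective _ w.injective]
  congr 1
  ext y
  constructor
  · rintro ⟨x, ⟨h1, h2⟩, rfl⟩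
    exact ⟨(weyl_root hw x).2 h1, (h x).1 h2⟩
  · rintro ⟨h1, h2⟩
    refine ⟨w.symm y, ⟨(weyl_root (weyl_symm hw) y).2 h1, (h _).2 (by simpa using h2)⟩, by simp⟩

lemma count_fiber {n : ℕ} (K : Fin n → List ℤ) (hT : TT n K) (C : List (List ℤ))
    (hCK : ∀ c, c ∈ C ↔ ∃ i, c = K i) (hC : ∀ c ∈ C, c ∈ LR) (P P' : X8 → Prop)
    (p : List ℤ → Bool)
    (hp : ∀ l ∈ LR, P' (toV l) ↔ p l = true) (u : Fin n → X8) (hu : u ∈ Orth n)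
    (hP : ∀ w, IsWeyl w → (∀ i, w (u i) = toV (K i)) → ∀ x, P x ↔ P' (w x)) :
    {x | isRoot x ∧ (∀ i, dot (u i) x = 0) ∧ P x}.ncard =
      (LR.filter (fun a => orthB C a && p a)).length := by
  obtain ⟨w, hw, hwu⟩ := hT u hu
  rw [← count_root (fun x => (∀ s ∈ {x | ∃ c ∈ C, x = toV c}, dot s x = 0) ∧ P' x) _
    (fun l hl => by rw [orth_toV C hC l hl, hp l hl, Bool.and_eq_true])]
  refine count_weyl hw _ _ fun x => and_congr ?_ (hP w hw hwu x)
  constructor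
  · rintro h _ ⟨c, hc, rfl⟩
    obtain ⟨i, rfl⟩ := (hCK c).1 hc
    rw [← hwu, hw.1]; exact h i
  · intro h i
    rw [← hw.1, hwu]
    exact h _ ⟨_, (hCK _).2 ⟨i, rfl⟩, rfl⟩

lemma count_succ {n m : ℕ} (hm : m ≠ 0) (K : Fin n → List ℤ) (hT : TT n K) (C : List (List ℤ))
    (hCK : ∀ c, c ∈ C ↔ ∃ i, c = K i) (hC : ∀ c ∈ C, c ∈ LR)
    (hcnt : (LR.filter (fun a => orthB C a)).length = m) (hf : (Orth n).Finite) :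
    (Orth (n + 1)).Finite ∧ (Orth (n + 1)).ncard = (Orth n).ncard * m := by
  refine fib_count hm _ hf _ (fun u x h => ((orth_snoc u x).1 h).1) fun u hu => ?_
  have := count_fiber K hT C hCK hC (fun _ => True) (fun _ => True) (fun _ => true) (by simp) u hu
    (by simp)
  simp only [Bool.and_true, hcnt, and_true] at this
  rw [← this]
  congr 1
  ext x
  simp [orth_snoc, hu]

def K0 : Fin 0 → List ℤ := Fin.elim0
def K1 : Fin 1 → List ℤ := Fin.snoc K0 k1
def K2 : Fin 2 → List ℤ := Fin.snoc K1 k2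
def K3 : Fin 3 → List ℤ := Fin.snoc K2 k3

lemma hCK0 : ∀ c, c ∈ ([] : List (List ℤ)) ↔ ∃ i, c = K0 i := by simp
lemma hCK1 : ∀ c, c ∈ [k1] ↔ ∃ i, c = K1 i := by
  intro c; rw [Fin.exists_fin_one]; simp [show K1 0 = k1 from rfl]
lemma hCK2 : ∀ c, c ∈ [k1, k2] ↔ ∃ i, c = K2 i := by
  intro c; rw [Fin.exists_fin_two]; simp [show K2 0 = k1 from rfl, show K2 1 = k2 from rfl]
lemma hCK3 : ∀ c, c ∈ [k1, k2, k3] ↔ ∃ i, c = K3 i := by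
  intro c
  simp [Fin.exists_fin_succ, show K3 0 = k1 from rfl, show K3 1 = k2 from rfl,
    show K3 2 = k3 from rfl]

lemma hC0 : ∀ c ∈ ([] : List (List ℤ)), c ∈ LR := by simp
lemma hC1 : ∀ c ∈ [k1], c ∈ LR := by simp [kmem]
lemma hC2 : ∀ c ∈ [k1, k2], c ∈ LR := by simp [kmem]
lemma hC3 : ∀ c ∈ [k1, k2, k3], c ∈ LR := by simp [kmem]

lemma T0 : TT 0 K0 := fun _ _ => ⟨_, weyl_refl, fun i => i.elim0⟩
lemma T1 : TT 1 K1 := T_succ K0 T0 [] hCK0 hC0 k1 kmem.1 (by decide) step0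
lemma T2 : TT 2 K2 := T_succ K1 T1 _ hCK1 hC1 k2 kmem.2.1 (by decide) step1
lemma T3 : TT 3 K3 := T_succ K2 T2 _ hCK2 hC2 k3 kmem.2.2.1 (by decide) step2

lemma orth3_count : (Orth 3).Finite ∧ (Orth 3).ncard = 240 * 126 * 60 := by
  have h0 : Orth 0 = Set.univ := by
    ext v; simp [Orth]
  have h0f : (Orth 0).Finite := Set.toFinite _
  have h0c : (Orth 0).ncard = 1 := by rw [h0, Set.ncard_univ]; simp
  have h1 := count_succ (by norm_num) K0 T0 [] hCK0 hC0 cnt0 h0f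
  have h2 := count_succ (by norm_num) K1 T1 _ hCK1 hC1 cnt1 h1.1
  have h3 := count_succ (by norm_num) K2 T2 _ hCK2 hC2 cnt2 h2.1
  exact ⟨h3.1, by rw [h3.2, h2.2, h1.2, h0c]⟩

def PE (x : X8) : Prop := twoL (toV k1 + toV k2 + toV k3 + x)

lemma PE_iff (l : List ℤ) (hl : l ∈ LR) : PE (toV l) ↔ evB l = true := by
  unfold PE evB
  rw [twoL_iff, forall_root, List.all_eq_true]
  refine forall₂_congr fun r hr => ?_
  rw [dot_add_left, dot_add_left, dot_add_left, dot_toV kmem.1 hr, dot_toV kmem.2.1 hr,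
    dot_toV kmem.2.2.1 hr, dot_toV hl hr, beq_iff_eq]
  constructor
  · rintro ⟨n, hn⟩
    have : ldot k1 r + ldot k2 r + ldot k3 r + ldot l r = 8 * n := by
      have h : (ldot k1 r + ldot k2 r + ldot k3 r + ldot l r : ℝ) = 8 * n := by linarith
      exact_mod_cast h
    omega
  · intro h
    obtain ⟨n, hn⟩ := Int.dvd_of_emod_eq_zero h
    refine ⟨n, ?_⟩
    have h : (ldot k1 r + ldot k2 r + ldot k3 r + ldot l r : ℝ) = 8 * n := by exact_mod_cast hn
    linarith

lemma PE_w (u : Fin 3 → X8) (w : X8 ≃ₗ[ℝ] X8) (hw : IsWeyl w)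
    (h : ∀ i, w (u i) = toV (K3 i)) (x : X8) : twoL (∑ i, u i + x) ↔ PE (w x) := by
  rw [← weyl_twoL hw, map_add, map_sum, Fin.sum_univ_three, h, h, h]
  rfl

lemma sum_snoc3 (u : Fin 3 → X8) (x : X8) :
    ∑ i, (Fin.snoc u x : Fin 4 → X8) i = ∑ i, u i + x := by
  rw [Fin.sum_univ_castSucc]; simp only [Fin.snoc_castSucc, Fin.snoc_last]

lemma count_O : {v : Fin 4 → X8 | v ∈ Orth 4 ∧ twoL (∑ i, v i)}.ncard = 3628800 := by
  have := (fib_count (m := 2) (by norm_num) (Orth 3) orth3_count.1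
    {v : Fin 4 → X8 | v ∈ Orth 4 ∧ twoL (∑ i, v i)}
    (fun u x h => ((orth_snoc u x).1 h.1).1) fun u hu => ?_).2
  · rw [this, orth3_count.2]
  · rw [← cnt3, ← count_fiber K3 T3 _ hCK3 hC3 (fun x => twoL (∑ i, u i + x)) PE evB PE_iff u hu
      (fun w hw h x => PE_w u w hw h x)]
    congr 1
    ext x
    simp only [Set.mem_ofPred_eq, sum_snoc3, orth_snoc, hu, true_and, and_assoc]

lemma count_Y : {v : Fin 4 → X8 | v ∈ Orth 4 ∧ ¬ twoL (∑ i, v i)}.ncard = 43545600 := by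
  have := (fib_count (m := 24) (by norm_num) (Orth 3) orth3_count.1
    {v : Fin 4 → X8 | v ∈ Orth 4 ∧ ¬ twoL (∑ i, v i)}
    (fun u x h => ((orth_snoc u x).1 h.1).1) fun u hu => ?_).2
  · rw [this, orth3_count.2]
  · rw [← cnt3', ← count_fiber K3 T3 _ hCK3 hC3 (fun x => ¬ twoL (∑ i, u i + x))
      (fun x => ¬ PE x) (fun a => !(evB a)) (fun l hl => by simp [PE_iff l hl]) u hu
      (fun w hw h x => not_congr (PE_w u w hw h x))]
    congr 1
    ext x
    simp only [Set.mem_ofPred_eq, sum_snoc3, orth_snoc, hu, true_and, and_assoc]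

lemma T4 (v : Fin 4 → X8) (hv : v ∈ Orth 4) (h : twoL (∑ i, v i)) :
    ∃ w, IsWeyl w ∧ ∀ i, w (v i) = toV ((Fin.snoc K3 k4 : Fin 4 → List ℤ) i) := by
  rw [← Fin.snoc_init_self v] at hv h
  rw [sum_snoc3] at h
  rw [orth_snoc] at hv
  obtain ⟨hu, hx, hux⟩ := hv
  obtain ⟨w, hw, h1, h2⟩ := T_step K3 T3 _ hCK3 hC3 k4 kmem.2.2.2.1 (by decide) PE evB PE_iff step3
    _ hu _ hx hux (fun w hw h' => (PE_w _ w hw h' _).1 h)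
  refine ⟨w, hw, fun i => ?_⟩
  induction i using Fin.lastCases with
  | last => rw [Fin.snoc_last]; exact h2
  | cast i => rw [Fin.snoc_castSucc]; exact h1 i

lemma T4' (v : Fin 4 → X8) (hv : v ∈ Orth 4) (h : ¬ twoL (∑ i, v i)) :
    ∃ w, IsWeyl w ∧ ∀ i, w (v i) = toV ((Fin.snoc K3 k4' : Fin 4 → List ℤ) i) := by
  rw [← Fin.snoc_init_self v] at hv h
  rw [sum_snoc3] at h
  rw [orth_snoc] at hv
  obtain ⟨hu, hx, hux⟩ := hv
  obtain ⟨w, hw, h1, h2⟩ := T_step K3 T3 _ hCK3 hC3 k4' kmem.2.2.2.2 (by decide)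
    (fun x => ¬ PE x) (fun a => !(evB a)) (fun l hl => by simp [PE_iff l hl]) step3'
    _ hu _ hx hux (fun w hw h' => (not_congr (PE_w _ w hw h' _)).1 h)
  refine ⟨w, hw, fun i => ?_⟩
  induction i using Fin.lastCases with
  | last => rw [Fin.snoc_last]; exact h2
  | cast i => rw [Fin.snoc_castSucc]; exact h1 i

lemma conj_of {u v : Fin 4 → X8} {k : Fin 4 → X8}
    (hu : ∃ w, IsWeyl w ∧ ∀ i, w (u i) = k i) (hv : ∃ w, IsWeyl w ∧ ∀ i, w (v i) = k i) :
    ∃ w, IsWeyl w ∧ ∀ i, w (u i) = v i := by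
  obtain ⟨w, hw, h⟩ := hu
  obtain ⟨w', hw', h'⟩ := hv
  refine ⟨_, weyl_trans hw (weyl_symm hw'), fun i => ?_⟩
  simp [h, ← h']

/-- The set `V₄` of quadruples of pairwise orthogonal roots is the
disjoint union of exactly two Weyl group orbits: `O`, the quadruples whose sum
lies in `2Λ` (3628800 elements), and `Y = V₄ \ O` (43545600 elements). Two
quadruples in `V₄` are conjugate under `W` if and only if they lie in the same
part of this partition. -/
theorem stmt_10 :
    {v : Fin 4 → (Fin 8 → ℝ) |
      (∀ i, isRoot (v i)) ∧ (∀ i j, i ≠ j → dot (v i) (v j) = 0) ∧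
      ∃ x, inLambda x ∧ (∑ i, v i) = (2 : ℝ) • x}.ncard = 3628800 ∧
    {v : Fin 4 → (Fin 8 → ℝ) |
      (∀ i, isRoot (v i)) ∧ (∀ i j, i ≠ j → dot (v i) (v j) = 0) ∧
      ¬∃ x, inLambda x ∧ (∑ i, v i) = (2 : ℝ) • x}.ncard = 43545600 ∧
    ∀ u v : Fin 4 → (Fin 8 → ℝ),
      (∀ i, isRoot (u i)) → (∀ i j, i ≠ j → dot (u i) (u j) = 0) →
      (∀ i, isRoot (v i)) → (∀ i j, i ≠ j → dot (v i) (v j) = 0) →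
      ((∃ w : (Fin 8 → ℝ) ≃ₗ[ℝ] (Fin 8 → ℝ), IsWeyl w ∧ ∀ i, w (u i) = v i) ↔
        ((∃ x, inLambda x ∧ (∑ i, u i) = (2 : ℝ) • x) ↔
          (∃ x, inLambda x ∧ (∑ i, v i) = (2 : ℝ) • x))) := by
  refine ⟨?_, ?_, fun u v hu1 hu2 hv1 hv2 => ⟨?_, fun h => ?_⟩⟩
  · rw [← count_O]
    congr 1
    ext v
    exact and_assoc.symm
  · rw [← count_Y]
    congr 1
    ext v
    exact and_assoc.symm
  · rintro ⟨w, hw, h⟩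
    have h2 : ∑ i, v i = w (∑ i, u i) := by rw [map_sum]; simp [h]
    have h3 := weyl_twoL hw (∑ i, u i)
    rw [← h2] at h3
    exact h3.symm
  · by_cases hu : twoL (∑ i, u i)
    · exact conj_of (T4 u ⟨hu1, hu2⟩ hu) (T4 v ⟨hv1, hv2⟩ (h.1 hu))
    · exact conj_of (T4' u ⟨hu1, hu2⟩ hu) (T4' v ⟨hv1, hv2⟩ fun hv => hu (h.2 hv))
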